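/- Let p ∈ Δ*_m. Then the function G on nonnegative m×n matrices defined by G(π) = KL(π𝟙 | p) is 1-relatively smooth with respect to the negative entropy h_e(π) = Σ_{ij} π_{ij} log(π_{ij}) over the simplex Δ_{m×n}; that is, the function π ↦ h_e(π) − G(π) is convex on Δ_{m×n}. -/

import Mathlib

open Finset Filter Topology ENNReal

noncomputable section

/-- Frobenius inner product `⟨c, π⟩ = ∑_{ij} c_ij π_ij`. -/
def frob {m n : ℕ} (c π : Matrix (Fin m) (Fin n) ℝ) : ℝ := ∑ i, ∑ j, c i j * π i j

/-- Row sums `π𝟙`. -/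
def rowSum {m n : ℕ} (π : Matrix (Fin m) (Fin n) ℝ) : Fin m → ℝ := fun i => ∑ j, π i j

/-- Column sums `πᵀ𝟙`. -/
def colSum {m n : ℕ} (π : Matrix (Fin m) (Fin n) ℝ) : Fin n → ℝ := fun j => ∑ i, π i j

/-- Kullback–Leibler divergence between nonnegative vectors. -/
def KLvec {k : ℕ} (a b : Fin k → ℝ) : ℝ := ∑ i, (a i * Real.log (a i / b i) - a i + b i)

/-- Kullback–Leibler divergence between nonnegative matrices. -/
def KLmat {m n : ℕ} (a b : Matrix (Fin m) (Fin n) ℝ) : ℝ :=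
  ∑ i, ∑ j, (a i j * Real.log (a i j / b i j) - a i j + b i j)

/-- The tipless simplex `Δ*_k`: strictly positive entries summing to 1. -/
def simplexPos (k : ℕ) : Set (Fin k → ℝ) := {p | (∀ i, 0 < p i) ∧ ∑ i, p i = 1}

/-- The simplex `Δ_k`: nonnegative entries summing to 1. -/
def simplexNN (k : ℕ) : Set (Fin k → ℝ) := {p | (∀ i, 0 ≤ p i) ∧ ∑ i, p i = 1}

/-- Transport plans `Γ(p, q)`. -/
def Gamma {m n : ℕ} (p : Fin m → ℝ) (q : Fin n → ℝ) : Set (Matrix (Fin m) (Fin n) ℝ) :=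
  {π | (∀ i j, 0 ≤ π i j) ∧ rowSum π = p ∧ colSum π = q}

/-- Half-relaxed plans `Γ(*, q)`. -/
def GammaStar {m n : ℕ} (q : Fin n → ℝ) : Set (Matrix (Fin m) (Fin n) ℝ) :=
  {π | (∀ i j, 0 ≤ π i j) ∧ colSum π = q}

/-- Reference plan `π^ref = (mn)⁻¹ 𝟙𝟙ᵀ`. -/
def piRef (m n : ℕ) : Matrix (Fin m) (Fin n) ℝ := fun _ _ => 1 / (m * n)

/-- Optimal transport value `OT(p,q)`. -/
def OTval {m n : ℕ} (c : Matrix (Fin m) (Fin n) ℝ) (p : Fin m → ℝ) (q : Fin n → ℝ) : ℝ :=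
  ⨅ π : Gamma p q, frob c π.1

/-- Entropic OT objective `⟨c,π⟩ + β⁻¹ KL(π|π^ref)`. -/
def eotObj {m n : ℕ} (c : Matrix (Fin m) (Fin n) ℝ) (β : ℝ) (π : Matrix (Fin m) (Fin n) ℝ) : ℝ :=
  frob c π + β⁻¹ * KLmat π (piRef m n)

/-- Entropic OT value `EOT_β(p,q)`. -/
def eotVal {m n : ℕ} (c : Matrix (Fin m) (Fin n) ℝ) (β : ℝ) (p : Fin m → ℝ) (q : Fin n → ℝ) : ℝ :=
  ⨅ π : Gamma p q, eotObj c β π.1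

/-- Gibbs kernel `K = e^{-βc}` (entrywise). -/
def gibbs {m n : ℕ} (c : Matrix (Fin m) (Fin n) ℝ) (β : ℝ) : Matrix (Fin m) (Fin n) ℝ :=
  fun i j => Real.exp (-(β * c i j))

/-- Annealed Sinkhorn scaling vectors `(a_t, b_t)`:
`b_0 = 𝟙`, `a_{t+1} = p ⊘ (K_t b_t)`, `b_{t+1} = q ⊘ (K_{t+1}ᵀ a_{t+1})`, `K_t = e^{-β_t c}`. -/
def sinkAB {m n : ℕ} (p : Fin m → ℝ) (q : Fin n → ℝ) (c : Matrix (Fin m) (Fin n) ℝ)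
    (β : ℕ → ℝ) : ℕ → (Fin m → ℝ) × (Fin n → ℝ)
  | 0 => (fun _ => 1, fun _ => 1)
  | t + 1 =>
    let prev := sinkAB p q c β t
    let a : Fin m → ℝ := fun i => p i / ∑ j, gibbs c (β t) i j * prev.2 j
    (a, fun j => q j / ∑ i, gibbs c (β (t + 1)) i j * a i)

/-- Annealed Sinkhorn primal iterate `π_t = diag(a_t) K_t diag(b_t)`. -/
def sinkPlan {m n : ℕ} (p : Fin m → ℝ) (q : Fin n → ℝ) (c : Matrix (Fin m) (Fin n) ℝ)
    (β : ℕ → ℝ) (t : ℕ) : Matrix (Fin m) (Fin n) ℝ :=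
  fun i j => (sinkAB p q c β t).1 i * gibbs c (β t) i j * (sinkAB p q c β t).2 j

/-- `ℓ¹` norm of a vector. -/
def l1vec {k : ℕ} (a : Fin k → ℝ) : ℝ := ∑ i, |a i|

/-- Oscillation semi-norm `‖c‖_osc = max c - min c`. -/
def cOsc {m n : ℕ} (c : Matrix (Fin m) (Fin n) ℝ) : ℝ :=
  (⨆ i, ⨆ j, c i j) - ⨅ i, ⨅ j, c i j

/-- `‖log p‖_∞`. -/
def logSup {k : ℕ} (p : Fin k → ℝ) : ℝ := ⨆ i, |Real.log (p i)|

/-- The rounding ("projection") procedure of Altschuler et al. (Algorithm 3). -/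
def roundPlan {m n : ℕ} (p : Fin m → ℝ) (q : Fin n → ℝ) (π : Matrix (Fin m) (Fin n) ℝ) :
    Matrix (Fin m) (Fin n) ℝ :=
  let π' : Matrix (Fin m) (Fin n) ℝ := fun i j => min 1 (p i / rowSum π i) * π i j
  let π'' : Matrix (Fin m) (Fin n) ℝ := fun i j => π' i j * min 1 (q j / colSum π' j)
  fun i j => π'' i j +
    (p i - rowSum π'' i) * (q j - colSum π'' j) / l1vec (fun i' => p i' - rowSum π'' i')

/-- Relaxed entropic objective `F^reg(π) = ⟨c,π⟩ + α⁻¹ KL(π𝟙|p) + β⁻¹ KL(π|π^ref)`. -/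
def Freg {m n : ℕ} (c : Matrix (Fin m) (Fin n) ℝ) (p : Fin m → ℝ) (α β : ℝ)
    (π : Matrix (Fin m) (Fin n) ℝ) : ℝ :=
  frob c π + α⁻¹ * KLvec (rowSum π) p + β⁻¹ * KLmat π (piRef m n)

/-- Dual functional for the relaxed entropic problem. -/
def dualFun {m n : ℕ} (p : Fin m → ℝ) (q : Fin n → ℝ) (c : Matrix (Fin m) (Fin n) ℝ)
    (α β : ℝ) (u : Fin m → ℝ) (v : Fin n → ℝ) : ℝ :=
  α⁻¹ * (∑ i, (1 - Real.exp (-(α * u i))) * p i) + ∑ j, v j * q j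
    - β⁻¹ * (∑ i, ∑ j, Real.exp (β * (u i + v j - c i j)) * piRef m n i j) + β⁻¹

/-- Dual functional of entropic OT. -/
def eotDual {m n : ℕ} (p : Fin m → ℝ) (q : Fin n → ℝ) (c : Matrix (Fin m) (Fin n) ℝ)
    (β : ℝ) (u : Fin m → ℝ) (v : Fin n → ℝ) : ℝ :=
  ∑ i, p i * u i + ∑ j, q j * v j
    + β⁻¹ * (1 - ∑ i, ∑ j, piRef m n i j * Real.exp (β * (u i + v j - c i j)))

/-- The set `C_β` of plans of the form `diag(a) e^{-βc} diag(b)` with `a, b ≥ 0`. -/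
def scalingSet {m n : ℕ} (c : Matrix (Fin m) (Fin n) ℝ) (β : ℝ) :
    Set (Matrix (Fin m) (Fin n) ℝ) :=
  {π | ∃ a : Fin m → ℝ, ∃ b : Fin n → ℝ, (∀ i, 0 ≤ a i) ∧ (∀ j, 0 ≤ b j) ∧
    π = fun i j => a i * Real.exp (-(β * c i j)) * b j}

/-!
By the chain rule for the entropy, with `r = π𝟙`,
`∑ π_ij log π_ij - ∑ r_i log r_i = ∑ π_ij log (π_ij / r_i)`, while `KL(r|p)` differs from
`∑ r_i log r_i` by an affine function of `π`. Hence `h_e - G` is, up to an affine function, a sum of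
terms `x log (x / s)` evaluated at linear functions `x = π_ij`, `s = r_i` of `π`, and
`x log (x / s) = s φ(x / s)` is jointly convex, being the perspective of the convex function
`φ(x) = x log x`.
-/

section Convexity

open scoped Pointwise

variable {𝕜 E β : Type*}

theorem convexOn_sum {ι : Type*} [Semiring 𝕜] [PartialOrder 𝕜] [AddCommMonoid E] [SMul 𝕜 E]
    [AddCommMonoid β] [PartialOrder β] [IsOrderedAddMonoid β] [Module 𝕜 β] {s : Set E}
    {t : Finset ι} {f : ι → E → β} (hs : Convex 𝕜 s) (hf : ∀ i ∈ t, ConvexOn 𝕜 s (f i)) :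
    ConvexOn 𝕜 s (fun x => ∑ i ∈ t, f i x) := by
  rw [← Finset.sum_fn]
  exact Finset.sum_induction f (ConvexOn 𝕜 s) (fun _ _ => ConvexOn.add) (convexOn_const 0 hs) hf

theorem smul_div_smul_add_div_smul [Field 𝕜] [AddCommMonoid E] [Module 𝕜 E] {T : 𝕜} (hT : T ≠ 0)
    (a b : 𝕜) (v w : E) : T • ((a / T) • v + (b / T) • w) = a • v + b • w := by
  rw [smul_add, smul_smul, smul_smul, mul_div_cancel₀ _ hT, mul_div_cancel₀ _ hT]

variable [Field 𝕜] [AddCommGroup E] [Module 𝕜 E] [AddCommMonoid β] [Module 𝕜 β]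

/-- The perspective `(x, t) ↦ t f(x / t)` of a function `f`, used to prove joint convexity of
`x log (x / s)`. Since `0⁻¹ = 0`, its value at `t = 0` is `0`. -/
def perspective (f : E → β) (q : E × 𝕜) : β := q.2 • f (q.2⁻¹ • q.1)

theorem perspective_smul (f : E → β) (t : 𝕜) (x : E) : perspective f (t • x, t) = t • f x := by
  rcases eq_or_ne t 0 with rfl | ht
  · simp [perspective]
  · simp [perspective, inv_smul_smul₀ ht]

variable [LinearOrder 𝕜] [IsStrictOrderedRing 𝕜] {s : Set E}

theorem convex_setOf_mem_smul (hs : Convex 𝕜 s) :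
    Convex 𝕜 {q : E × 𝕜 | 0 ≤ q.2 ∧ q.1 ∈ q.2 • s} := by
  rintro ⟨x, t⟩ ⟨ht, hx⟩ ⟨y, u⟩ ⟨hu, hy⟩ a b ha hb -
  have hat : 0 ≤ a * t := mul_nonneg ha ht
  have hbu : 0 ≤ b * u := mul_nonneg hb hu
  refine ⟨add_nonneg hat hbu, ?_⟩
  change a • x + b • y ∈ (a * t + b * u) • s
  rw [hs.add_smul hat hbu, mul_smul, mul_smul]
  exact Set.add_mem_add (Set.smul_mem_smul_set hx) (Set.smul_mem_smul_set hy)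

theorem convexOn_perspective [PartialOrder β] [PosSMulMono 𝕜 β] {f : E → β}
    (hf : ConvexOn 𝕜 s f) :
    ConvexOn 𝕜 {q : E × 𝕜 | 0 ≤ q.2 ∧ q.1 ∈ q.2 • s} (perspective f) := by
  refine ⟨convex_setOf_mem_smul hf.1, ?_⟩
  rintro ⟨v, t⟩ ⟨ht, x, hx, (rfl : t • x = v)⟩ ⟨w, u⟩ ⟨hu, y, hy, (rfl : u • y = w)⟩ a b ha hb -
  have hat : 0 ≤ a * t := mul_nonneg ha ht
  have hbu : 0 ≤ b * u := mul_nonneg hb hu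
  simp only [Prod.smul_mk, Prod.mk_add_mk, smul_eq_mul, perspective_smul, smul_smul]
  rcases (add_nonneg hat hbu).eq_or_lt' with hT | hT
  · obtain ⟨hat0, hbu0⟩ := (add_eq_zero_iff_of_nonneg hat hbu).1 hT
    simp [hat0, hbu0, perspective]
  set T := a * t + b * u
  have weights_sum : a * t / T + b * u / T = 1 := by rw [← add_div, div_self hT.ne']
  calc perspective f ((a * t) • x + (b * u) • y, T)
      = T • f ((a * t / T) • x + (b * u / T) • y) := by
        rw [← smul_div_smul_add_div_smul hT.ne', perspective_smul]
    _ ≤ T • ((a * t / T) • f x + (b * u / T) • f y) :=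
        smul_le_smul_of_nonneg_left
          (hf.2 hx hy (div_nonneg hat hT.le) (div_nonneg hbu hT.le) weights_sum) hT.le
    _ = (a * t) • f x + (b * u) • f y := smul_div_smul_add_div_smul hT.ne' _ _ _ _

theorem perspective_mul_log :
    perspective (fun x : ℝ => x * Real.log x) = fun q : ℝ × ℝ => q.1 * Real.log (q.1 / q.2) := by
  ext ⟨x, s⟩
  rcases eq_or_ne s 0 with rfl | hs
  · simp [perspective]
  · simp [perspective, div_eq_inv_mul, mul_assoc, hs]

theorem convexOn_mul_log_div :
    ConvexOn ℝ {q : ℝ × ℝ | 0 ≤ q.1 ∧ 0 ≤ q.2 ∧ (q.2 = 0 → q.1 = 0)}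
      (fun q => q.1 * Real.log (q.1 / q.2)) := by
  have domain_eq : {q : ℝ × ℝ | 0 ≤ q.1 ∧ 0 ≤ q.2 ∧ (q.2 = 0 → q.1 = 0)} =
      {q | 0 ≤ q.2 ∧ q.1 ∈ q.2 • Set.Ici (0 : ℝ)} := by
    ext ⟨x, s⟩
    constructor
    · rintro ⟨hx, hs, h⟩
      exact ⟨hs, x / s, div_nonneg hx hs, mul_div_cancel_of_imp' h⟩
    · rintro ⟨hs, y, hy, (rfl : s * y = x)⟩
      exact ⟨mul_nonneg hs hy, hs, fun h => mul_eq_zero_of_left h y⟩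
  rw [domain_eq, ← perspective_mul_log]
  exact convexOn_perspective Real.convexOn_mul_log

end Convexity

theorem mul_log_div_eq_sub {x s : ℝ} (h : s = 0 → x = 0) :
    x * Real.log (x / s) = x * Real.log x - x * Real.log s := by
  rcases eq_or_ne x 0 with rfl | hx
  · simp
  · rw [Real.log_div hx (mt h hx), mul_sub]

theorem KLvec_eq_sum_mul_log_sub {k : ℕ} {a b : Fin k → ℝ} (h : ∀ i, b i = 0 → a i = 0) :
    KLvec a b = ∑ i, a i * Real.log (a i) - ∑ i, a i * (Real.log (b i) + 1) + ∑ i, b i := by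
  simp only [KLvec, mul_log_div_eq_sub (h _), ← sum_sub_distrib, ← sum_add_distrib]
  exact sum_congr rfl fun i _ => by ring

section Simplex

variable {R ι κ : Type*} [Semiring R] [PartialOrder R] [IsOrderedRing R]

theorem convex_nonneg_matrix : Convex R {π : Matrix ι κ R | ∀ i j, 0 ≤ π i j} :=
  fun _ hx _ hy _ _ ha hb _ i j =>
    add_nonneg (mul_nonneg ha (hx i j)) (mul_nonneg hb (hy i j))

theorem convex_matrix_simplex [Fintype ι] [Fintype κ] :
    Convex R {π : Matrix ι κ R | (∀ i j, 0 ≤ π i j) ∧ ∑ i, ∑ j, π i j = 1} :=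
  convex_nonneg_matrix.inter <| convex_hyperplane
    ⟨fun _ _ => by simp [sum_add_distrib], fun _ _ => by simp [mul_sum]⟩ 1

end Simplex

section Marginal

variable {m n : ℕ}

/-- The row sum `π ↦ (π𝟙)_i` as a linear functional, so that convexity can be pulled back along
it. -/
def rowSumLin (i : Fin m) : Matrix (Fin m) (Fin n) ℝ →ₗ[ℝ] ℝ :=
  ∑ j, Matrix.entryLinearMap ℝ ℝ i j

@[simp]
theorem rowSumLin_apply (i : Fin m) (π : Matrix (Fin m) (Fin n) ℝ) :
    rowSumLin i π = rowSum π i := by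
  simp [rowSumLin, rowSum]

/-- The negative conditional entropy `∑_{ij} π_ij log (π_ij / (π𝟙)_i)` of the column index given the
row index, which is the non-affine part of `h_e - G`. -/
def negCondEntropy (π : Matrix (Fin m) (Fin n) ℝ) : ℝ :=
  ∑ i, ∑ j, π i j * Real.log (π i j / rowSum π i)

theorem rowSum_nonneg {π : Matrix (Fin m) (Fin n) ℝ} {i : Fin m} (hπ : ∀ j, 0 ≤ π i j) :
    0 ≤ rowSum π i :=
  sum_nonneg fun j _ => hπ j

theorem eq_zero_of_rowSum_eq_zero {π : Matrix (Fin m) (Fin n) ℝ} {i : Fin m}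
    (hπ : ∀ j, 0 ≤ π i j) (h : rowSum π i = 0) (j : Fin n) : π i j = 0 :=
  (sum_eq_zero_iff_of_nonneg fun j _ => hπ j).1 h j (mem_univ j)

theorem negCondEntropy_eq_sub {π : Matrix (Fin m) (Fin n) ℝ} (hπ : ∀ i j, 0 ≤ π i j) :
    negCondEntropy π =
      ∑ i, ∑ j, π i j * Real.log (π i j) - ∑ i, rowSum π i * Real.log (rowSum π i) := by
  have chain_rule (i j) : π i j * Real.log (π i j / rowSum π i) =
      π i j * Real.log (π i j) - π i j * Real.log (rowSum π i) :=
    mul_log_div_eq_sub (eq_zero_of_rowSum_eq_zero (hπ i) · j)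
  simp only [negCondEntropy, chain_rule, sum_sub_distrib, ← sum_mul]
  rfl

theorem convexOn_negCondEntropy :
    ConvexOn ℝ {π : Matrix (Fin m) (Fin n) ℝ | ∀ i j, 0 ≤ π i j} negCondEntropy := by
  refine convexOn_sum convex_nonneg_matrix fun i _ =>
    convexOn_sum convex_nonneg_matrix fun j _ => ?_
  have pullback := convexOn_mul_log_div.comp_linearMap
    ((Matrix.entryLinearMap ℝ ℝ i j).prod (rowSumLin (n := n) i))
  rw [Function.comp_def] at pullback
  simp only [LinearMap.prod_apply, Function.prod_apply, Matrix.entryLinearMap_apply,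
    rowSumLin_apply] at pullback
  refine pullback.subset (fun π hπ => ?_) convex_nonneg_matrix
  simpa using ⟨hπ i j, rowSum_nonneg (hπ i), fun h => eq_zero_of_rowSum_eq_zero (hπ i) h j⟩

theorem convexOn_sum_rowSum_mul (c : Fin m → ℝ) {s : Set (Matrix (Fin m) (Fin n) ℝ)}
    (hs : Convex ℝ s) : ConvexOn ℝ s (fun π => ∑ i, rowSum π i * c i) :=
  ((∑ i, c i • rowSumLin i).convexOn hs).congr fun π _ => by simp [mul_comm]

theorem negEntropy_sub_KLvec_rowSum {p : Fin m → ℝ} {π : Matrix (Fin m) (Fin n) ℝ}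
    (hπ : ∀ i j, 0 ≤ π i j) (hp : ∀ i, p i = 0 → rowSum π i = 0) :
    (∑ i, ∑ j, π i j * Real.log (π i j)) - KLvec (rowSum π) p =
      negCondEntropy π + ∑ i, rowSum π i * (Real.log (p i) + 1) + -∑ i, p i := by
  rw [KLvec_eq_sum_mul_log_sub hp, negCondEntropy_eq_sub hπ]
  ring

end Marginal

theorem marginal_KL_relatively_smooth_general
    {m n : ℕ} (p : Fin m → ℝ) (hp : ∀ i, 0 < p i) :
    ConvexOn ℝ {π : Matrix (Fin m) (Fin n) ℝ | ∀ i j, 0 ≤ π i j}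
      (fun π => (∑ i, ∑ j, π i j * Real.log (π i j)) - KLvec (rowSum π) p) :=
  ((convexOn_negCondEntropy.add
    (convexOn_sum_rowSum_mul _ convex_nonneg_matrix)).add_const _).congr
      fun _ hπ => (negEntropy_sub_KLvec_rowSum hπ fun i h => absurd h (hp i).ne').symm

/-- Lemma 7: relative smoothness of the marginal KL penalty.
For `p ∈ Δ*_m`, the function `G(π) = KL(π𝟙|p)` is 1-relatively smooth with respect to the
negative entropy `h_e(π) = ∑ π_ij log π_ij` over `Δ_{m×n}`, i.e. `h_e - G` is convex there. -/
theorem marginal_KL_relatively_smooth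
    {m n : ℕ} (p : Fin m → ℝ) (hp : p ∈ simplexPos m) :
    ConvexOn ℝ
      {π : Matrix (Fin m) (Fin n) ℝ | (∀ i j, 0 ≤ π i j) ∧ ∑ i, ∑ j, π i j = 1}
      (fun π => (∑ i, ∑ j, π i j * Real.log (π i j)) - KLvec (rowSum π) p) := by
  exact (marginal_KL_relatively_smooth_general p hp.1).subset (fun _ hπ => hπ.1)
    convex_matrix_simplex

end
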